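/- Let S be a topological semigroup, let LUC(S)* be the continuous dual of LUC(S) equipped with the weak* topology, and let S act on LUC(S)* by (s·I)(f) = I(f·s). If X is a weak*-closed subset of the unit sphere {I ∈ LUC(S)* : ‖I‖ = 1} which is invariant under this action, then the map (s, I) ↦ s·I is jointly continuous from S × X to X. -/

import Mathlib

open BoundedContinuousFunction MeasureTheory Filter Topology

noncomputable section

namespace Paper

variable {S : Type*} [Semigroup S] [TopologicalSpace S] [ContinuousMul S]

/-- Left translate: `(f·s)(t) = f (s * t)`. -/
def lTrans (f : S →ᵇ ℝ) (s : S) : S →ᵇ ℝ :=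
  f.compContinuous ⟨fun t => s * t, continuous_mul_left s⟩

/-- Right translate: `(s·f)(t) = f (t * s)`. -/
def rTrans (f : S →ᵇ ℝ) (s : S) : S →ᵇ ℝ :=
  f.compContinuous ⟨fun t => t * s, continuous_mul_right s⟩

@[simp] lemma lTrans_apply (f : S →ᵇ ℝ) (s t : S) : lTrans f s t = f (s * t) := rfl
@[simp] lemma rTrans_apply (f : S →ᵇ ℝ) (s t : S) : rTrans f s t = f (t * s) := rfl

variable (S) in
/-- The space of left uniformly continuous bounded functions on `S`. -/
def LUC : Submodule ℝ (S →ᵇ ℝ) where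
  carrier := {f | Continuous fun s => lTrans f s}
  add_mem' {f g} hf hg := by
    show Continuous fun s => lTrans (f + g) s
    have h : (fun s => lTrans (f + g) s) = fun s => lTrans f s + lTrans g s := by
      funext s; ext t; simp
    rw [h]; exact Continuous.add hf hg
  zero_mem' := by
    show Continuous fun s : S => lTrans (0 : S →ᵇ ℝ) s
    have h : (fun s : S => lTrans (0 : S →ᵇ ℝ) s) = fun _ => (0 : S →ᵇ ℝ) := by
      funext s; ext t; simp
    rw [h]; exact continuous_const
  smul_mem' r f hf := by
    show Continuous fun s => lTrans (r • f) s
    have h : (fun s => lTrans (r • f) s) = fun s => r • lTrans f s := by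
      funext s; ext t; simp
    rw [h]; exact Continuous.const_smul hf r

variable (S) in
/-- The space of right uniformly continuous bounded functions on `S`. -/
def RUC : Submodule ℝ (S →ᵇ ℝ) where
  carrier := {f | Continuous fun s => rTrans f s}
  add_mem' {f g} hf hg := by
    show Continuous fun s => rTrans (f + g) s
    have h : (fun s => rTrans (f + g) s) = fun s => rTrans f s + rTrans g s := by
      funext s; ext t; simp
    rw [h]; exact Continuous.add hf hg
  zero_mem' := by
    show Continuous fun s : S => rTrans (0 : S →ᵇ ℝ) s
    have h : (fun s : S => rTrans (0 : S →ᵇ ℝ) s) = fun _ => (0 : S →ᵇ ℝ) := by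
      funext s; ext t; simp
    rw [h]; exact continuous_const
  smul_mem' r f hf := by
    show Continuous fun s => rTrans (r • f) s
    have h : (fun s => rTrans (r • f) s) = fun s => r • rTrans f s := by
      funext s; ext t; simp
    rw [h]; exact Continuous.const_smul hf r

lemma mem_LUC_iff {f : S →ᵇ ℝ} : f ∈ LUC S ↔ Continuous fun s => lTrans f s := Iff.rfl

lemma mem_RUC_iff {f : S →ᵇ ℝ} : f ∈ RUC S ↔ Continuous fun s => rTrans f s := Iff.rfl

lemma one_mem_LUC : (1 : S →ᵇ ℝ) ∈ LUC S := by
  rw [mem_LUC_iff]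
  have h : (fun s : S => lTrans (1 : S →ᵇ ℝ) s) = fun _ => (1 : S →ᵇ ℝ) := by
    funext s; ext t; simp
  rw [h]; exact continuous_const

lemma one_mem_RUC : (1 : S →ᵇ ℝ) ∈ RUC S := by
  rw [mem_RUC_iff]
  have h : (fun s : S => rTrans (1 : S →ᵇ ℝ) s) = fun _ => (1 : S →ᵇ ℝ) := by
    funext s; ext t; simp
  rw [h]; exact continuous_const

lemma mul_mem_LUC {f g : S →ᵇ ℝ} (hf : f ∈ LUC S) (hg : g ∈ LUC S) : f * g ∈ LUC S := by
  rw [mem_LUC_iff] at *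
  have h : (fun s => lTrans (f * g) s) = fun s => lTrans f s * lTrans g s := by
    funext s; ext t; simp
  rw [h]; exact Continuous.mul hf hg

lemma mul_mem_RUC {f g : S →ᵇ ℝ} (hf : f ∈ RUC S) (hg : g ∈ RUC S) : f * g ∈ RUC S := by
  rw [mem_RUC_iff] at *
  have h : (fun s => rTrans (f * g) s) = fun s => rTrans f s * rTrans g s := by
    funext s; ext t; simp
  rw [h]; exact Continuous.mul hf hg

lemma lTrans_mem {f : S →ᵇ ℝ} (hf : f ∈ LUC S) (s : S) : lTrans f s ∈ LUC S := by
  rw [mem_LUC_iff] at *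
  have h : (fun t => lTrans (lTrans f s) t) = fun t => lTrans f (s * t) := by
    funext t; ext u; simp [mul_assoc]
  rw [h]; exact hf.comp (continuous_mul_left s)

lemma rTrans_mem {f : S →ᵇ ℝ} (hf : f ∈ RUC S) (s : S) : rTrans f s ∈ RUC S := by
  rw [mem_RUC_iff] at *
  have h : (fun t => rTrans (rTrans f s) t) = fun t => rTrans f (t * s) := by
    funext t; ext u; simp [mul_assoc]
  rw [h]; exact hf.comp (continuous_mul_right s)

variable (S) in
/-- `I` is a left invariant mean on `LUC S`. -/
def IsLeftInvariantMean (I : LUC S →ₗ[ℝ] ℝ) : Prop :=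
  I ⟨1, one_mem_LUC⟩ = 1 ∧
  (∀ f : LUC S, 0 ≤ (f : S →ᵇ ℝ) → 0 ≤ I f) ∧
  ∀ (f : S →ᵇ ℝ) (hf : f ∈ LUC S) (s : S),
    I ⟨lTrans f s, lTrans_mem hf s⟩ = I ⟨f, hf⟩

variable (S) in
/-- `I` is a right invariant mean on `RUC S`. -/
def IsRightInvariantMean (I : RUC S →ₗ[ℝ] ℝ) : Prop :=
  I ⟨1, one_mem_RUC⟩ = 1 ∧
  (∀ f : RUC S, 0 ≤ (f : S →ᵇ ℝ) → 0 ≤ I f) ∧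
  ∀ (f : S →ᵇ ℝ) (hf : f ∈ RUC S) (s : S),
    I ⟨rTrans f s, rTrans_mem hf s⟩ = I ⟨f, hf⟩

variable (S) in
def LeftAmenable : Prop := ∃ I : LUC S →ₗ[ℝ] ℝ, IsLeftInvariantMean S I

variable (S) in
def RightAmenable : Prop := ∃ I : RUC S →ₗ[ℝ] ℝ, IsRightInvariantMean S I

variable (S) in
/-- A topological semigroup is amenable if `LUC` admits a left invariant mean and
`RUC` admits a right invariant mean. -/
def Amenable : Prop := LeftAmenable S ∧ RightAmenable S

variable (S) in
/-- `I` is a multiplicative left invariant mean on `LUC S`. -/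
def IsMultLeftInvariantMean (I : LUC S →ₗ[ℝ] ℝ) : Prop :=
  IsLeftInvariantMean S I ∧
  ∀ (f g : S →ᵇ ℝ) (hf : f ∈ LUC S) (hg : g ∈ LUC S),
    I ⟨f * g, mul_mem_LUC hf hg⟩ = I ⟨f, hf⟩ * I ⟨g, hg⟩

variable (S) in
def IsMultRightInvariantMean (I : RUC S →ₗ[ℝ] ℝ) : Prop :=
  IsRightInvariantMean S I ∧
  ∀ (f g : S →ᵇ ℝ) (hf : f ∈ RUC S) (hg : g ∈ RUC S),
    I ⟨f * g, mul_mem_RUC hf hg⟩ = I ⟨f, hf⟩ * I ⟨g, hg⟩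

variable (S) in
def ExtremelyLeftAmenable : Prop := ∃ I : LUC S →ₗ[ℝ] ℝ, IsMultLeftInvariantMean S I

variable (S) in
def ExtremelyRightAmenable : Prop := ∃ I : RUC S →ₗ[ℝ] ℝ, IsMultRightInvariantMean S I

variable (S) in
def ExtremelyAmenable : Prop := ExtremelyLeftAmenable S ∧ ExtremelyRightAmenable S


/-- The translation operator `f ↦ f·s` on `LUC S`, as a linear map. -/
def transOpL (s : S) : LUC S →ₗ[ℝ] LUC S where
  toFun f := ⟨lTrans f.1 s, lTrans_mem f.2 s⟩
  map_add' f g := by ext t; simp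
  map_smul' r f := by ext t; simp

/-- The translation operator `f ↦ f·s` on `LUC S`, as a continuous linear map. -/
def transOp (s : S) : LUC S →L[ℝ] LUC S :=
  ⟨transOpL s, AddMonoidHomClass.continuous_of_bound (transOpL s) 1 fun f => by
    rw [one_mul]
    show ‖lTrans (f : S →ᵇ ℝ) s‖ ≤ ‖(f : S →ᵇ ℝ)‖
    exact norm_compContinuous_le (f : S →ᵇ ℝ) ⟨fun t => s * t, continuous_mul_left s⟩⟩

/-- The natural left action of `S` on the dual of `LUC S`: `(s·I)(f) = I (f·s)`. -/
def actDual (s : S) (I : WeakDual ℝ (LUC S)) : WeakDual ℝ (LUC S) :=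
  ContinuousLinearMap.comp I (transOp s)

/-- The topological dual of a seminormed space `E` (the former Mathlib `NormedSpace.Dual`). -/
abbrev NormedSpace.Dual (𝕜 : Type*) [NontriviallyNormedField 𝕜] (E : Type*)
    [SeminormedAddCommGroup E] [NormedSpace 𝕜 E] : Type _ := E →L[𝕜] 𝕜

lemma continuous_transOp_apply (f : LUC S) : Continuous fun s : S => transOp s f :=
  Continuous.subtype_mk (mem_LUC_iff.1 f.2) fun s => lTrans_mem f.2 s

/-- Evaluation on a norm-bounded family of functionals that is pointwise continuous is jointly
continuous. -/
lemma continuous_eval_of_norm_le {T Y E : Type*} [TopologicalSpace T] [TopologicalSpace Y]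
    [SeminormedAddCommGroup E] [NormedSpace ℝ E] (g : T → E) (hg : Continuous g)
    (φ : Y → E →L[ℝ] ℝ) (C : ℝ) (hC : ∀ y, ‖φ y‖ ≤ C) (hφ : ∀ e, Continuous fun y => φ y e) :
    Continuous fun p : T × Y => φ p.2 (g p.1) := by
  refine continuous_iff_continuousAt.2 fun ⟨t, y⟩ => ?_
  have hsmall : Tendsto (fun p : T × Y => φ p.2 (g p.1 - g t)) (𝓝 (t, y)) (𝓝 0) := by
    refine squeeze_zero_norm
      (fun p => (φ p.2).le_of_opNorm_le (hC p.2) (g p.1 - g t)) ?_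
    have h : Continuous fun p : T × Y => C * ‖g p.1 - g t‖ := by fun_prop
    simpa using h.tendsto (t, y)
  have hpt : Tendsto (fun p : T × Y => φ p.2 (g t)) (𝓝 (t, y)) (𝓝 (φ y (g t))) :=
    ((hφ (g t)).comp continuous_snd).tendsto (t, y)
  simpa [ContinuousAt] using hsmall.add hpt

/-- Lemma 4.4(i): if `X` is a weak*-closed, `S`-invariant subset of the unit sphere of
`LUC(S)*`, then the natural action `(s, I) ↦ s·I` of `S` on `X` is jointly continuous. -/
theorem continuous_actDual_of_closed_invariant_sphere
    {S : Type*} [Semigroup S] [TopologicalSpace S] [ContinuousMul S]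
    (X : Set (WeakDual ℝ (LUC S))) (hclosed : IsClosed X)
    (hsphere : ∀ I ∈ X, ‖(show NormedSpace.Dual ℝ (LUC S) from I)‖ = 1)
    (hinv : ∀ s : S, ∀ I ∈ X, actDual s I ∈ X) :
    Continuous fun p : S × X => (⟨actDual p.1 ↑p.2, hinv p.1 ↑p.2 p.2.2⟩ : X) := by
  refine Continuous.subtype_mk (WeakDual.continuous_of_continuous_eval fun f => ?_) _
  exact continuous_eval_of_norm_le (fun s : S => transOp s f) (continuous_transOp_apply f)
    (fun I : X => (show NormedSpace.Dual ℝ (LUC S) from I.1)) 1 (fun I => (hsphere I.1 I.2).le)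
    fun e => (WeakDual.eval_continuous e).comp continuous_subtype_val

end Paper
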